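/- Let K ⊂ ℝ^{n+1} be a smooth, strictly convex body with the origin in its interior, with support function h, Gauss curvature 𝒦, inverse Gauss map X = Dh, and centro-affine Laplacian Δ. Then, for every x ∈ S^n, ΔX + nX = h ∇̄ log(h^{n+2}/𝒦), where the identity holds componentwise for the ℝ^{n+1}-valued map X. -/

import Mathlib

open MeasureTheory Matrix Metric
open scoped RealInnerProductSpace

noncomputable section

/-- Euclidean space `ℝ^{n+1}`. -/
abbrev Euc (n : ℕ) : Type := EuclideanSpace ℝ (Fin (n + 1))

/-- The Euclidean Hessian matrix of `H : ℝ^{n+1} → ℝ` at `x`. -/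
def ehess (n : ℕ) (H : Euc n → ℝ) (x : Euc n) : Matrix (Fin (n + 1)) (Fin (n + 1)) ℝ :=
  Matrix.of fun i j =>
    fderiv ℝ (fun y => fderiv ℝ H y (EuclideanSpace.single j 1)) x (EuclideanSpace.single i 1)

/-- For the 1-homogeneous extension `H` of the support function `h` and `x ∈ S^n`, the matrix
`D²H(x) + h(x)·x xᵀ`.  Its restriction to the tangent space `x^⊥ = T_x S^n` is
`A[h] = ∇̄²h + h ḡ`, and `x` is an eigenvector with eigenvalue `h(x)`. -/
def bmat (n : ℕ) (H : Euc n → ℝ) (x : Euc n) : Matrix (Fin (n + 1)) (Fin (n + 1)) ℝ :=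
  ehess n H x + Matrix.of fun i j => H x * (x i * x j)

/-- `σ_n = det A[h] = det(∇̄²h + h ḡ)/det ḡ`, computed as `det(bmat)/h`. -/
def sigman (n : ℕ) (H : Euc n → ℝ) (x : Euc n) : ℝ :=
  Matrix.det (bmat n H x) / H x

/-- The Gauss curvature `𝒦 = 1/σ_n`. -/
def gaussCurv (n : ℕ) (H : Euc n → ℝ) (x : Euc n) : ℝ := (sigman n H x)⁻¹

/-- The round (spherical) gradient `∇̄f` at `x ∈ S^n`: the Euclidean gradient of the
0-homogeneous extension `y ↦ f(y/‖y‖)`.  It depends only on `f|_{S^n}` and lies in `T_x S^n`. -/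
def sphGrad (n : ℕ) (f : Euc n → ℝ) (x : Euc n) : Euc n :=
  gradient (fun y => f (‖y‖⁻¹ • y)) x

/-- The function `log (h^{n+2}/𝒦)` (as a function of `y`; on the sphere it agrees with the
centro-affine expression appearing in the paper). -/
def logQ (n : ℕ) (H : Euc n → ℝ) (y : Euc n) : ℝ :=
  Real.log ((H y) ^ (n + 2) / gaussCurv n H y)

/-- The centro-affine inner product `g(∇f, ∇u) = h ⟨A[h]⁻¹ ∇̄f, ∇̄u⟩` of the `g`-gradients of
`f` and `u`, where `g = A[h]/h` is the centro-affine metric. -/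
def gInner (n : ℕ) (H f u : Euc n → ℝ) (x : Euc n) : ℝ :=
  H x * ∑ i, (bmat n H x)⁻¹.mulVec (fun j => sphGrad n f x j) i * sphGrad n u x i

/-- The squared centro-affine norm `|∇f|_g²` of the `g`-gradient of `f`. -/
def gNormSq (n : ℕ) (H f : Euc n → ℝ) (x : Euc n) : ℝ := gInner n H f f x

/-- The centro-affine Laplacian `Δf = div_g(∇ f)` (with respect to the centro-affine connection
`∇` induced by the centro-affine normal `ξ = X`, and the centro-affine metric `g = A[h]/h`),
computed via the identity `Δf = tr_g(A[hf]/h) - n f`, i.e.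
`Δf = tr(B[h]⁻¹ B[hf]) - (n+1) f` where `B[u] = D²ũ + u·x xᵀ` for the 1-homogeneous
extension `ũ` of `u`. -/
def caLap (n : ℕ) (H f : Euc n → ℝ) (x : Euc n) : ℝ :=
  Matrix.trace ((bmat n H x)⁻¹ * bmat n (fun y => H y * f (‖y‖⁻¹ • y)) x) - (n + 1) * f x

/-- The spherical Lebesgue measure on `S^n ⊂ ℝ^{n+1}` (up to a positive constant). -/
def sphMeasure (n : ℕ) : Measure (sphere (0 : Euc n) 1) :=
  (volume : Measure (Euc n)).toSphere

/-- The density of the cone-volume-type measure `dV = h σ_n dμ` with respect to the spherical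
Lebesgue measure. -/
def volDens (n : ℕ) (H : Euc n → ℝ) (x : Euc n) : ℝ := H x * sigman n H x

/-!
Write `h = H x`, `B = D²H + h x xᵀ`, and `T = D²(∂ᵢH)`, which by symmetry of third derivatives is
also the derivative of `D²H` in the direction `eᵢ`. Euler's identity gives `D²H x = 0`, so `x` is an
eigenvector of `B` with eigenvalue `h`, and `B⁻¹ D²H` is the projection onto `x^⊥`.

For a 0-homogeneous `f` the Leibniz rule for `D²(H f)` gives
`Δf = 2 ⟨B⁻¹ Df, DH⟩ + h tr(B⁻¹ D²f)`; with `f = ∂ᵢH` this is `2 (∂ᵢH - xᵢ h) + h tr(B⁻¹ T)`.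

On the other side `log (h^{n+2}/𝒦) = (n + 1) log h + log det B`, and `∇̄` differentiates in the
tangential direction `v = eᵢ - xᵢ x`. By Jacobi's formula the determinant contributes
`tr(B⁻¹ ∂ᵥB) = tr(B⁻¹ ∂ᵥD²H) + h⁻¹ ∂ᵥH`, where `∂ᵥD²H = T + xᵢ D²H` because `D²H` is homogeneous of
degree `-1`. Collecting terms yields `(n + 2) ∂ᵢH / h - 2 xᵢ + tr(B⁻¹ T)`.
-/

open Filter Topology

section Homogeneous

variable {E F : Type*} [NormedAddCommGroup E] [NormedSpace ℝ E]
  [NormedAddCommGroup F] [NormedSpace ℝ F]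

/-- Positive homogeneity of integer degree `k`. Negative degrees are allowed, since differentiation
lowers the degree by one. -/
def PosHomogeneous (k : ℤ) (f : E → F) : Prop :=
  ∀ c : ℝ, 0 < c → ∀ x, f (c • x) = c ^ k • f x

namespace PosHomogeneous

variable {k : ℤ} {f : E → F}

protected theorem fderiv (hf : PosHomogeneous k f) : PosHomogeneous (k - 1) (fderiv ℝ f) := by
  intro c hc x
  have chain : c • fderiv ℝ f (c • x) = c ^ k • fderiv ℝ f x := by
    rw [← fderiv_comp_smul, funext (hf c hc)]
    exact congrFun (fderiv_const_smul_field (c ^ k)) x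
  rw [zpow_sub_one₀ hc.ne', mul_comm, mul_smul, ← chain, inv_smul_smul₀ hc.ne']

theorem clm_apply {G : Type*} [NormedAddCommGroup G] [NormedSpace ℝ G] {L : E → G →L[ℝ] F}
    (hL : PosHomogeneous k L) (v : G) :
    PosHomogeneous k fun x => L x v := fun c hc x => by
  simp only [hL c hc x, _root_.smul_apply]

theorem fderiv_apply_self (hf : PosHomogeneous k f) {x : E} (hx : DifferentiableAt ℝ f x) :
    fderiv ℝ f x x = (k : ℝ) • f x := by
  have chain : HasDerivAt (fun c : ℝ => f (c • x)) (fderiv ℝ f x x) 1 := by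
    have ray : HasDerivAt (fun c : ℝ => c • x) x 1 := by
      simpa using (hasDerivAt_id (1 : ℝ)).smul_const x
    exact HasFDerivAt.comp_hasDerivAt (1 : ℝ) (by simpa using hx.hasFDerivAt) ray
  have power : HasDerivAt (fun c : ℝ => f (c • x)) ((k : ℝ) • f x) 1 := by
    have := (hasDerivAt_zpow k (1 : ℝ) (.inl one_ne_zero)).smul_const (f x)
    refine (this.congr_deriv (by simp)).congr_of_eventuallyEq ?_
    filter_upwards [eventually_gt_nhds (zero_lt_one' ℝ)] with c hc using hf c hc x
  exact chain.unique power

theorem apply_inv_norm_smul (hf : PosHomogeneous 0 f) (x : E) : f (‖x‖⁻¹ • x) = f x := by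
  obtain rfl | hx := eq_or_ne x 0
  · simp
  · simpa using hf ‖x‖⁻¹ (by positivity) x

end PosHomogeneous

end Homogeneous

section Normalization

variable {E : Type*} [NormedAddCommGroup E] [InnerProductSpace ℝ E]

theorem hasFDerivAt_norm {x : E} (hx : x ≠ 0) :
    HasFDerivAt (fun y : E => ‖y‖) (‖x‖⁻¹ • innerSL ℝ x) x := by
  have hsqrt := (hasStrictFDerivAt_norm_sq x).hasFDerivAt.sqrt (by simpa using hx)
  simpa [Real.sqrt_sq, ← Nat.cast_smul_eq_nsmul ℝ 2, smul_smul] using hsqrt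

theorem hasFDerivAt_inv_norm_smul {x : E} (hx : x ≠ 0) :
    HasFDerivAt (fun y : E => ‖y‖⁻¹ • y)
      (‖x‖⁻¹ • (ContinuousLinearMap.id ℝ E - (‖x‖ ^ 2)⁻¹ • (innerSL ℝ x).smulRight x)) x := by
  have hinv := (hasDerivAt_inv (norm_ne_zero_iff.2 hx)).comp_hasFDerivAt x (hasFDerivAt_norm hx)
  refine (hinv.smul (hasFDerivAt_id x)).congr_fderiv ?_
  ext v
  simp only [Function.comp_apply, smul_smul, neg_mul, neg_smul, id_eq, _root_.add_apply,
    _root_.smul_apply, ContinuousLinearMap.id_apply, ContinuousLinearMap.smulRight_apply,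
    _root_.neg_apply, coe_innerSL_apply, smul_eq_mul, smul_sub, _root_.sub_apply]
  module

end Normalization

section MatrixCalculus

theorem trace_mul_vecMulVec_comm_of_isSymm {R ι : Type*} [Fintype ι] [CommSemiring R]
    {A : Matrix ι ι R} (hA : A.IsSymm) (a b : ι → R) :
    trace (A * vecMulVec a b) = trace (A * vecMulVec b a) := by
  rw [← trace_transpose, transpose_mul, transpose_vecMulVec, hA.eq, trace_mul_comm]

variable {𝕜 E ι : Type*} [NontriviallyNormedField 𝕜] [NormedAddCommGroup E] [NormedSpace 𝕜 E]

/-- The derivative of a matrix-valued map, taken entry by entry because `Matrix` carries no global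
norm. -/
def matrixFDeriv (𝕜 : Type*) {E ι : Type*} [NontriviallyNormedField 𝕜] [NormedAddCommGroup E]
    [NormedSpace 𝕜 E] (M : E → Matrix ι ι 𝕜) (x : E) : E →ₗ[𝕜] Matrix ι ι 𝕜 :=
  LinearMap.pi fun j => LinearMap.pi fun k => fderiv 𝕜 (fun y => M y j k) x

theorem matrixFDeriv_apply (M : E → Matrix ι ι 𝕜) (x v : E) (j k : ι) :
    matrixFDeriv 𝕜 M x v j k = fderiv 𝕜 (fun y => M y j k) x v := rfl

variable [Fintype ι] [DecidableEq ι]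

theorem sum_det_updateRow_eq_trace {R : Type*} [CommRing R] (A B : Matrix ι ι R) :
    ∑ k, (A.updateRow k (B k)).det = trace (A.adjugate * B) := by
  rw [trace_mul_comm]
  refine Finset.sum_congr rfl fun k _ => ?_
  rw [← cramer_transpose_apply, cramer_eq_adjugate_mulVec, ← adjugate_transpose, mulVec_transpose]
  rfl

theorem hasFDerivAt_det {M : E → Matrix ι ι 𝕜} {M' : ι → ι → E →L[𝕜] 𝕜} {x : E}
    (hM : ∀ j k, HasFDerivAt (fun y => M y j k) (M' j k) x) :
    HasFDerivAt (fun y => (M y).det) (∑ k, ∑ j, (M x).adjugate k j • M' j k) x := by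
  let detMultilinear : ContinuousMultilinearMap 𝕜 (fun _ : ι => ι → 𝕜) 𝕜 :=
    ⟨(detRowAlternating (R := 𝕜) (n := ι)).toMultilinearMap, continuous_id.matrix_det⟩
  have hrow (j : ι) : HasFDerivAt (fun y => M y j) (ContinuousLinearMap.pi (M' j)) x :=
    hasFDerivAt_pi.2 (hM j)
  refine (HasFDerivAt.multilinear_comp detMultilinear hrow).congr_fderiv ?_
  ext v
  have hsum : ∑ k, detMultilinear (Function.update (M x) k fun l => M' k l v)
      = trace ((M x).adjugate * of fun j k => M' j k v) := sum_det_updateRow_eq_trace _ _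
  simpa [trace, mul_apply] using hsum

theorem fderiv_log_det_apply [NormedSpace ℝ E] {M : E → Matrix ι ι ℝ} {x : E}
    (hM : ∀ j k, DifferentiableAt ℝ (fun y => M y j k) x) (hdet : (M x).det ≠ 0) (v : E) :
    fderiv ℝ (fun y => Real.log (M y).det) x v = trace ((M x)⁻¹ * matrixFDeriv ℝ M x v) := by
  have hd := (hasFDerivAt_det fun j k => (hM j k).hasFDerivAt).log hdet
  rw [hd.fderiv, inv_def, Ring.inverse_eq_inv, Matrix.smul_mul, trace_smul]
  simp [trace, mul_apply, matrixFDeriv_apply]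

end MatrixCalculus

section Gradient

variable {ι : Type*} [Fintype ι] {F G : EuclideanSpace ℝ ι → ℝ} {x : EuclideanSpace ℝ ι}

theorem gradient_apply_eq_fderiv [DecidableEq ι] (F : EuclideanSpace ℝ ι → ℝ)
    (x : EuclideanSpace ℝ ι) (i : ι) :
    gradient F x i = fderiv ℝ F x (EuclideanSpace.single i 1) := by
  rw [← inner_gradient_left, EuclideanSpace.inner_single_right]
  simp

theorem fderiv_apply_eq_gradient_dotProduct (F : EuclideanSpace ℝ ι → ℝ)
    (x v : EuclideanSpace ℝ ι) : fderiv ℝ F x v = (gradient F x).ofLp ⬝ᵥ v.ofLp := by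
  rw [← inner_gradient_left, EuclideanSpace.inner_eq_star_dotProduct, dotProduct_comm]
  simp

theorem dotProduct_self_of_norm_eq_one (hx : ‖x‖ = 1) : x.ofLp ⬝ᵥ x.ofLp = 1 := by
  simpa [hx] using (EuclideanSpace.inner_eq_star_dotProduct x x).symm

theorem contDiffAt_gradient_apply {m : WithTop ℕ∞} (hF : ContDiffAt ℝ (m + 1) F x) (i : ι) :
    ContDiffAt ℝ m (fun y => gradient F y i) x := by
  classical
  simp only [gradient_apply_eq_fderiv]
  exact (hF.fderiv_right le_rfl).clm_apply contDiffAt_const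

theorem differentiableAt_gradient_apply (hF : ContDiffAt ℝ 2 F x) (i : ι) :
    DifferentiableAt ℝ (fun y => gradient F y i) x :=
  (contDiffAt_gradient_apply (m := 1) hF i).differentiableAt one_ne_zero

theorem gradient_mul_apply (hF : DifferentiableAt ℝ F x) (hG : DifferentiableAt ℝ G x) (i : ι) :
    gradient (fun y => F y * G y) x i = F x * gradient G x i + G x * gradient F x i := by
  classical
  simp [gradient_apply_eq_fderiv, fderiv_fun_mul hF hG]

theorem PosHomogeneous.gradient_apply {k : ℤ} (hF : PosHomogeneous k F) (i : ι) :
    PosHomogeneous (k - 1) fun y => gradient F y i := by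
  classical
  simp only [gradient_apply_eq_fderiv]
  exact hF.fderiv.clm_apply _

theorem PosHomogeneous.gradient_dotProduct_self {k : ℤ} (hF : PosHomogeneous k F)
    (hd : DifferentiableAt ℝ F x) : (gradient F x).ofLp ⬝ᵥ x.ofLp = k * F x := by
  rw [← fderiv_apply_eq_gradient_dotProduct, hF.fderiv_apply_self hd, smul_eq_mul]

end Gradient

section Hessian

variable {n : ℕ} {F G : Euc n → ℝ} {x : Euc n}

theorem ehess_apply (F : Euc n → ℝ) (x : Euc n) (i j : Fin (n + 1)) :
    ehess n F x i j = gradient (fun y => gradient F y j) x i := by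
  simp only [ehess, of_apply, gradient_apply_eq_fderiv]

theorem gradient_gradient_apply (F : Euc n → ℝ) (x : Euc n) (i : Fin (n + 1)) :
    gradient (fun y => gradient F y i) x = ehess n F x *ᵥ Pi.single i 1 := by
  ext j
  simp [ehess_apply]

theorem differentiableAt_ehess_apply (hF : ContDiffAt ℝ 3 F x) (i j : Fin (n + 1)) :
    DifferentiableAt ℝ (fun y => ehess n F y i j) x := by
  simp only [ehess_apply]
  exact differentiableAt_gradient_apply (contDiffAt_gradient_apply (m := 2) hF j) i

theorem isSymm_ehess (hF : ContDiffAt ℝ 2 F x) : (ehess n F x).IsSymm := by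
  have hd : DifferentiableAt ℝ (fderiv ℝ F) x :=
    (hF.fderiv_right (m := 1) le_rfl).differentiableAt one_ne_zero
  have hsymm := hF.isSymmSndFDerivAt (by simp)
  refine IsSymm.ext fun i j => ?_
  simp [ehess, fderiv_clm_apply hd (differentiableAt_const _), hsymm.eq]

theorem ehess_gradient_apply (hF : ContDiffAt ℝ 3 F x) (i : Fin (n + 1)) :
    ehess n (fun y => gradient F y i) x
      = matrixFDeriv ℝ (ehess n F) x (EuclideanSpace.single i 1) := by
  ext j k
  have hcomm : (fun y => ehess n F y k i) =ᶠ[𝓝 x] fun y => ehess n F y i k := by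
    filter_upwards [hF.eventually (by simp)] with y hy
    exact (isSymm_ehess (hy.of_le (by norm_num))).apply i k
  calc ehess n (fun y => gradient F y i) x j k
      = gradient (fun y => ehess n F y k i) x j := by simp only [ehess_apply]
    _ = gradient (fun y => ehess n F y i k) x j := by rw [hcomm.gradient_eq]
    _ = ehess n (fun y => gradient F y k) x j i := by simp only [ehess_apply]
    _ = ehess n (fun y => gradient F y k) x i j :=
        (isSymm_ehess (contDiffAt_gradient_apply (m := 2) hF k)).apply i j
    _ = matrixFDeriv ℝ (ehess n F) x (EuclideanSpace.single i 1) j k := by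
        simp only [ehess_apply, matrixFDeriv_apply, gradient_apply_eq_fderiv]

theorem ehess_mul (hF : ContDiffAt ℝ 2 F x) (hG : ContDiffAt ℝ 2 G x) :
    ehess n (fun y => F y * G y) x = F x • ehess n G x + G x • ehess n F x
      + (vecMulVec (gradient F x).ofLp (gradient G x).ofLp
        + vecMulVec (gradient G x).ofLp (gradient F x).ofLp) := by
  ext i j
  have hgrad : (fun y => gradient (fun z => F z * G z) y j)
      =ᶠ[𝓝 x] fun y => F y * gradient G y j + G y * gradient F y j := by
    filter_upwards [hF.eventually (by simp), hG.eventually (by simp)] with y hFy hGy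
    exact gradient_mul_apply (hFy.differentiableAt two_ne_zero) (hGy.differentiableAt two_ne_zero) j
  have hFd := hF.differentiableAt two_ne_zero
  have hGd := hG.differentiableAt two_ne_zero
  have hF'd := differentiableAt_gradient_apply hF j
  have hG'd := differentiableAt_gradient_apply hG j
  rw [ehess_apply, hgrad.gradient_eq, gradient_apply_eq_fderiv,
    fderiv_fun_add (hFd.fun_mul hG'd) (hGd.fun_mul hF'd), _root_.add_apply]
  simp only [← gradient_apply_eq_fderiv, gradient_mul_apply, hFd, hGd, hF'd, hG'd, ← ehess_apply,
    Matrix.add_apply, Matrix.smul_apply, vecMulVec_apply, smul_eq_mul]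
  ring

theorem PosHomogeneous.ehess_apply {k : ℤ} (hF : PosHomogeneous k F) (i j : Fin (n + 1)) :
    PosHomogeneous (k - 2) fun y => ehess n F y i j := by
  simp only [_root_.ehess_apply, show k - 2 = k - 1 - 1 by ring]
  exact (hF.gradient_apply j).gradient_apply i

theorem PosHomogeneous.ehess_mulVec_self {k : ℤ} (hF : PosHomogeneous k F)
    (hd : ContDiffAt ℝ 2 F x) : ehess n F x *ᵥ x.ofLp = (k - 1 : ℝ) • (gradient F x).ofLp := by
  ext j
  have heuler := (hF.gradient_apply j).gradient_dotProduct_self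
    (differentiableAt_gradient_apply hd j)
  calc (ehess n F x *ᵥ x.ofLp) j
      = (gradient (fun y => gradient F y j) x).ofLp ⬝ᵥ x.ofLp := by
        simp only [mulVec, dotProduct, ← _root_.ehess_apply, (isSymm_ehess hd).apply]
    _ = (k - 1 : ℝ) * gradient F x j := mod_cast heuler

theorem PosHomogeneous.matrixFDeriv_ehess_self {k : ℤ} (hF : PosHomogeneous k F)
    (hd : ContDiffAt ℝ 3 F x) :
    matrixFDeriv ℝ (ehess n F) x x = (k - 2 : ℝ) • ehess n F x := by
  ext i j
  have heuler := (hF.ehess_apply i j).fderiv_apply_self (differentiableAt_ehess_apply hd i j)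
  exact mod_cast heuler

end Hessian

section SupportMatrix

variable {n : ℕ} {H f : Euc n → ℝ} {x : Euc n}

theorem bmat_eq_ehess_add (H : Euc n → ℝ) (x : Euc n) :
    bmat n H x = ehess n H x + H x • vecMulVec x.ofLp x.ofLp := by
  ext i j
  simp [bmat, vecMulVec_apply]

theorem isSymm_bmat (hH : ContDiffAt ℝ 2 H x) : (bmat n H x).IsSymm := by
  rw [bmat_eq_ehess_add]
  exact (isSymm_ehess hH).add (IsSymm.smul (transpose_vecMulVec _ _) _)

theorem isSymm_inv_bmat (hH : ContDiffAt ℝ 2 H x) : (bmat n H x)⁻¹.IsSymm := by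
  rw [IsSymm, transpose_nonsing_inv, (isSymm_bmat hH).eq]

theorem bmat_mul (hH : ContDiffAt ℝ 2 H x) (hf : ContDiffAt ℝ 2 f x) :
    bmat n (fun y => H y * f y) x = f x • bmat n H x + H x • ehess n f x
      + (vecMulVec (gradient H x).ofLp (gradient f x).ofLp
        + vecMulVec (gradient f x).ofLp (gradient H x).ofLp) := by
  rw [bmat_eq_ehess_add, bmat_eq_ehess_add, ehess_mul hH hf]
  module

theorem differentiableAt_bmat_apply (hH : ContDiffAt ℝ 3 H x) (i j : Fin (n + 1)) :
    DifferentiableAt ℝ (fun y => bmat n H y i j) x := by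
  have hHd := hH.differentiableAt three_ne_zero
  have hEd := differentiableAt_ehess_apply hH i j
  simp only [bmat, Matrix.add_apply, of_apply]
  fun_prop

theorem matrixFDeriv_bmat (hH : ContDiffAt ℝ 3 H x) (v : Euc n) :
    matrixFDeriv ℝ (bmat n H) x v = matrixFDeriv ℝ (ehess n H) x v
      + fderiv ℝ H x v • vecMulVec x.ofLp x.ofLp
      + H x • (vecMulVec v.ofLp x.ofLp + vecMulVec x.ofLp v.ofLp) := by
  ext i j
  have hcoord (k : Fin (n + 1)) :=
    (EuclideanSpace.proj k : Euc n →L[ℝ] ℝ).hasFDerivAt (x := x)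
  have hE := (differentiableAt_ehess_apply hH i j).hasFDerivAt
  have hHd := (hH.differentiableAt three_ne_zero).hasFDerivAt
  have hB := hE.add (hHd.mul ((hcoord i).mul (hcoord j)))
  rw [matrixFDeriv_apply]
  refine (congrArg (· v) hB.fderiv).trans ?_
  simp only [PiLp.proj_apply, smul_add, EuclideanSpace.coe_proj, Pi.mul_apply, _root_.add_apply,
    _root_.smul_apply, smul_eq_mul, Matrix.add_apply, matrixFDeriv_apply, Matrix.smul_apply,
    vecMulVec_apply]
  ring

theorem bmat_mulVec_self (hH : PosHomogeneous 1 H) (hd : ContDiffAt ℝ 2 H x) (hx : ‖x‖ = 1) :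
    bmat n H x *ᵥ x.ofLp = H x • x.ofLp := by
  rw [bmat_eq_ehess_add, add_mulVec, hH.ehess_mulVec_self hd, smul_mulVec, vecMulVec_mulVec,
    dotProduct_self_of_norm_eq_one hx]
  simp

theorem inv_bmat_mulVec_self (hH : PosHomogeneous 1 H) (hd : ContDiffAt ℝ 2 H x) (hx : ‖x‖ = 1)
    (hHx : H x ≠ 0) (hdet : (bmat n H x).det ≠ 0) :
    (bmat n H x)⁻¹ *ᵥ x.ofLp = (H x)⁻¹ • x.ofLp := by
  have heigen : (bmat n H x)⁻¹ *ᵥ (H x • x.ofLp) = x.ofLp := by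
    rw [← bmat_mulVec_self hH hd hx, mulVec_mulVec, nonsing_inv_mul _ hdet.isUnit, one_mulVec]
  rw [mulVec_smul] at heigen
  rw [← inv_smul_smul₀ hHx ((bmat n H x)⁻¹ *ᵥ x.ofLp), heigen]

theorem trace_inv_bmat_mul_vecMulVec_self (hH : PosHomogeneous 1 H) (hd : ContDiffAt ℝ 2 H x)
    (hx : ‖x‖ = 1) (hHx : H x ≠ 0) (hdet : (bmat n H x).det ≠ 0) (v : Fin (n + 1) → ℝ) :
    trace ((bmat n H x)⁻¹ * vecMulVec x.ofLp v) = (H x)⁻¹ * (x.ofLp ⬝ᵥ v) := by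
  rw [mul_vecMulVec, trace_vecMulVec, inv_bmat_mulVec_self hH hd hx hHx hdet, smul_dotProduct,
    smul_eq_mul]

theorem trace_inv_bmat_mul_ehess (hH : PosHomogeneous 1 H) (hd : ContDiffAt ℝ 2 H x)
    (hx : ‖x‖ = 1) (hHx : H x ≠ 0) (hdet : (bmat n H x).det ≠ 0) :
    trace ((bmat n H x)⁻¹ * ehess n H x) = n := by
  rw [eq_sub_of_add_eq (bmat_eq_ehess_add H x).symm, Matrix.mul_sub, Matrix.mul_smul, trace_sub,
    trace_smul, nonsing_inv_mul _ hdet.isUnit,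
    trace_inv_bmat_mul_vecMulVec_self hH hd hx hHx hdet, dotProduct_self_of_norm_eq_one hx]
  simp [hHx]

theorem inv_bmat_mulVec_ehess_mulVec (hH : PosHomogeneous 1 H) (hd : ContDiffAt ℝ 2 H x)
    (hx : ‖x‖ = 1) (hHx : H x ≠ 0) (hdet : (bmat n H x).det ≠ 0) (v : Fin (n + 1) → ℝ) :
    (bmat n H x)⁻¹ *ᵥ (ehess n H x *ᵥ v) = v - (x.ofLp ⬝ᵥ v) • x.ofLp := by
  rw [eq_sub_of_add_eq (bmat_eq_ehess_add H x).symm, sub_mulVec, mulVec_sub, mulVec_mulVec,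
    nonsing_inv_mul _ hdet.isUnit, one_mulVec, smul_mulVec, vecMulVec_mulVec, op_smul_eq_smul,
    mulVec_smul, mulVec_smul, inv_bmat_mulVec_self hH hd hx hHx hdet, smul_comm _ (H x)⁻¹,
    smul_inv_smul₀ hHx]

end SupportMatrix

section Laplacian

variable {n : ℕ} {H f : Euc n → ℝ} {x : Euc n}

theorem caLap_eq_of_posHomogeneous_zero (hf : PosHomogeneous 0 f) (hfd : ContDiffAt ℝ 2 f x)
    (hHd : ContDiffAt ℝ 2 H x) (hdet : (bmat n H x).det ≠ 0) :
    caLap n H f x = 2 * (((bmat n H x)⁻¹ *ᵥ (gradient f x).ofLp) ⬝ᵥ (gradient H x).ofLp)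
      + H x * trace ((bmat n H x)⁻¹ * ehess n f x) := by
  simp only [caLap, hf.apply_inv_norm_smul]
  rw [bmat_mul hHd hfd]
  simp only [Matrix.mul_add, Matrix.mul_smul, trace_add, trace_smul, smul_eq_mul,
    nonsing_inv_mul _ hdet.isUnit, trace_one, Fintype.card_fin]
  rw [trace_mul_vecMulVec_comm_of_isSymm (isSymm_inv_bmat hHd) (gradient H x).ofLp, mul_vecMulVec,
    trace_vecMulVec]
  push_cast
  ring

theorem caLap_gradient_apply (hH : PosHomogeneous 1 H) (hd : ContDiffAt ℝ 3 H x) (hx : ‖x‖ = 1)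
    (hHx : H x ≠ 0) (hdet : (bmat n H x).det ≠ 0) (i : Fin (n + 1)) :
    caLap n H (fun y => gradient H y i) x = 2 * (gradient H x i - x i * H x)
      + H x * trace ((bmat n H x)⁻¹ * ehess n (fun y => gradient H y i) x) := by
  have hd2 : ContDiffAt ℝ 2 H x := hd.of_le (by norm_num)
  have heuler := hH.gradient_dotProduct_self (hd.differentiableAt three_ne_zero)
  rw [caLap_eq_of_posHomogeneous_zero (hH.gradient_apply i)
      (contDiffAt_gradient_apply (m := 2) hd i) hd2 hdet,
    gradient_gradient_apply, inv_bmat_mulVec_ehess_mulVec hH hd2 hx hHx hdet, sub_dotProduct,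
    smul_dotProduct, dotProduct_comm x.ofLp (gradient H x).ofLp, heuler]
  simp

end Laplacian

section Curvature

variable {n : ℕ} {H f : Euc n → ℝ} {x : Euc n}

theorem sphGrad_apply (hf : DifferentiableAt ℝ f x) (hx : ‖x‖ = 1) (i : Fin (n + 1)) :
    sphGrad n f x i = fderiv ℝ f x (EuclideanSpace.single i 1 - x i • x) := by
  have hfx : HasFDerivAt f (fderiv ℝ f x) (‖x‖⁻¹ • x) := by simpa [hx] using hf.hasFDerivAt
  have hcomp := hfx.comp (f := fun y : Euc n => ‖y‖⁻¹ • y) x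
    (hasFDerivAt_inv_norm_smul (norm_ne_zero_iff.1 (by simp [hx])))
  rw [sphGrad, gradient_apply_eq_fderiv]
  refine (congrArg (· (EuclideanSpace.single i 1)) hcomp.fderiv).trans ?_
  simp [hx, EuclideanSpace.inner_single_right]

theorem logQ_eq_add {y : Euc n} (hHy : H y ≠ 0) (hdet : (bmat n H y).det ≠ 0) :
    logQ n H y = (n + 1) * Real.log (H y) + Real.log (bmat n H y).det := by
  have hQ : H y ^ (n + 2) / gaussCurv n H y = H y ^ (n + 1) * (bmat n H y).det := by
    rw [gaussCurv, sigman]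
    field_simp
    ring
  rw [logQ, hQ, Real.log_mul (pow_ne_zero _ hHy) hdet, Real.log_pow]
  push_cast
  rfl

theorem hasFDerivAt_logQ (hd : ContDiffAt ℝ 3 H x) (hHx : H x ≠ 0)
    (hdet : (bmat n H x).det ≠ 0) :
    HasFDerivAt (logQ n H) (((n : ℝ) + 1) • (H x)⁻¹ • fderiv ℝ H x
      + fderiv ℝ (fun y => Real.log (bmat n H y).det) x) x := by
  have hHd := hd.differentiableAt three_ne_zero
  have hdetd : DifferentiableAt ℝ (fun y => (bmat n H y).det) x :=
    (hasFDerivAt_det fun i j => (differentiableAt_bmat_apply hd i j).hasFDerivAt).differentiableAt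
  refine (((hHd.hasFDerivAt.log hHx).const_mul _).add
    (hdetd.log hdet).hasFDerivAt).congr_of_eventuallyEq ?_
  filter_upwards [hHd.continuousAt.eventually_ne hHx, hdetd.continuousAt.eventually_ne hdet]
    with y hHy hdety using logQ_eq_add hHy hdety

theorem trace_inv_bmat_mul_matrixFDeriv_bmat (hH : PosHomogeneous 1 H) (hd : ContDiffAt ℝ 3 H x)
    (hx : ‖x‖ = 1) (hHx : H x ≠ 0) (hdet : (bmat n H x).det ≠ 0) {v : Euc n}
    (hv : x.ofLp ⬝ᵥ v.ofLp = 0) :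
    trace ((bmat n H x)⁻¹ * matrixFDeriv ℝ (bmat n H) x v)
      = trace ((bmat n H x)⁻¹ * matrixFDeriv ℝ (ehess n H) x v) + (H x)⁻¹ * fderiv ℝ H x v := by
  have hd2 : ContDiffAt ℝ 2 H x := hd.of_le (by norm_num)
  rw [matrixFDeriv_bmat hd]
  simp only [Matrix.mul_add, Matrix.mul_smul, trace_add, trace_smul, smul_eq_mul,
    trace_mul_vecMulVec_comm_of_isSymm (isSymm_inv_bmat hd2) v.ofLp,
    trace_inv_bmat_mul_vecMulVec_self hH hd2 hx hHx hdet, hv, dotProduct_self_of_norm_eq_one hx]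
  ring

theorem sphGrad_logQ_apply (hH : PosHomogeneous 1 H) (hd : ContDiffAt ℝ 3 H x) (hx : ‖x‖ = 1)
    (hHx : H x ≠ 0) (hdet : (bmat n H x).det ≠ 0) (i : Fin (n + 1)) :
    sphGrad n (logQ n H) x i = (n + 2) * (H x)⁻¹ * gradient H x i - 2 * x i
      + trace ((bmat n H x)⁻¹ * ehess n (fun y => gradient H y i) x) := by
  have hd2 : ContDiffAt ℝ 2 H x := hd.of_le (by norm_num)
  have hlogQ := hasFDerivAt_logQ hd hHx hdet
  set v : Euc n := EuclideanSpace.single i 1 - x i • x with hv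
  have htangent : x.ofLp ⬝ᵥ v.ofLp = 0 := by
    simp [hv, dotProduct_self_of_norm_eq_one hx]
  have hHv : fderiv ℝ H x v = gradient H x i - x i * H x := by
    simp [hv, hH.fderiv_apply_self (hd.differentiableAt three_ne_zero), gradient_apply_eq_fderiv]
  have hEv : matrixFDeriv ℝ (ehess n H) x v
      = ehess n (fun y => gradient H y i) x + x i • ehess n H x := by
    rw [hv, map_sub, map_smul, hH.matrixFDeriv_ehess_self hd, ← ehess_gradient_apply hd]
    push_cast
    module
  rw [sphGrad_apply hlogQ.differentiableAt hx, hlogQ.fderiv, _root_.add_apply,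
    fderiv_log_det_apply (differentiableAt_bmat_apply hd) hdet,
    trace_inv_bmat_mul_matrixFDeriv_bmat hH hd hx hHx hdet htangent, hEv, Matrix.mul_add,
    trace_add, Matrix.mul_smul, trace_smul, trace_inv_bmat_mul_ehess hH hd2 hx hHx hdet]
  simp only [_root_.smul_apply, smul_eq_mul, ← hv, hHv]
  field_simp
  ring

end Curvature

theorem centro_affine_main_identity_general {n : ℕ} {H : Euc n → ℝ} {x : Euc n}
    (hH : PosHomogeneous 1 H) (hd : ContDiffAt ℝ 3 H x) (hx : ‖x‖ = 1) (hpos : 0 < H x)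
    (hdet : 0 < (bmat n H x).det) (i : Fin (n + 1)) :
    caLap n H (fun y => gradient H y i) x + n * gradient H x i
      = H x * sphGrad n (logQ n H) x i := by
  rw [caLap_gradient_apply hH hd hx hpos.ne' hdet.ne',
    sphGrad_logQ_apply hH hd hx hpos.ne' hdet.ne']
  field_simp
  ring

/-- For a smooth, strictly convex body `K ⊂ ℝ^{n+1}` with the origin in its
interior, support function `h` (1-homogeneous extension `H`), Gauss curvature `𝒦`, inverse
Gauss map `X = Dh = gradient H` and centro-affine Laplacian `Δ`, one has, componentwise on
`S^n`: `ΔX + nX = h ∇̄ log(h^{n+2}/𝒦)`. -/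
theorem centro_affine_main_identity
    (n : ℕ) (hn : 2 ≤ n)
    (H : Euc n → ℝ) (K : Set (Euc n))
    (hK : K = {y : Euc n | ∀ x : Euc n, ⟪x, y⟫ ≤ H x})
    (hhomog : ∀ c : ℝ, 0 < c → ∀ x : Euc n, H (c • x) = c * H x)
    (hconv : ConvexOn ℝ Set.univ H)
    (hsmooth : ContDiffOn ℝ (⊤ : ℕ∞) H {(0 : Euc n)}ᶜ)
    (hpos : ∀ x ∈ sphere (0 : Euc n) 1, 0 < H x)
    (hposdef : ∀ x ∈ sphere (0 : Euc n) 1, (bmat n H x).PosDef) :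
    ∀ x ∈ sphere (0 : Euc n) 1, ∀ i : Fin (n + 1),
      caLap n H (fun y => gradient H y i) x + n * gradient H x i
        = H x * sphGrad n (logQ n H) x i := by
  intro x hx i
  have hx0 : x ≠ 0 := ne_zero_of_mem_unit_sphere ⟨x, hx⟩
  have hd : ContDiffAt ℝ 3 H x :=
    contDiffAt_infty.1 (hsmooth.contDiffAt (isOpen_compl_singleton.mem_nhds hx0)) 3
  exact centro_affine_main_identity_general (fun c hc y => by simpa using hhomog c hc y) hd
    (mem_sphere_zero_iff_norm.1 hx) (hpos x hx) (hposdef x hx).det_pos i
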